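/- Semantic adequacy of the translation into linear-time μ-calculus: for every closed RLL expression e, L(e) ⊆ L(e°), where L(φ) := {σ ∈ A^ω | σ ⊨ φ} for closed μLTL formulas φ. -/

import Mathlib

namespace RLLPaper

/-- Right-linear lattice (RLL) expressions over an alphabet `A`,
with de Bruijn indices for variables. -/
inductive Expr (A : Type) : Type
  | var : ℕ → Expr A
  | act : A → Expr A → Expr A
  | plus : Expr A → Expr A → Expr A
  | inter : Expr A → Expr A → Expr A
  | mu : Expr A → Expr A
  | nu : Expr A → Expr A

namespace Expr

variable {A : Type}

/-- The expression `0 := μX X`. -/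
def zero (A : Type) : Expr A := mu (var 0)

/-- The expression `⊤ := νX X`. -/
def top (A : Type) : Expr A := nu (var 0)

/-- Renaming of (free) de Bruijn variables. -/
def rename : (ℕ → ℕ) → Expr A → Expr A
  | r, var n => var (r n)
  | r, act a e => act a (rename r e)
  | r, plus e f => plus (rename r e) (rename r f)
  | r, inter e f => inter (rename r e) (rename r f)
  | r, mu e => mu (rename (fun n => match n with | 0 => 0 | m+1 => r m + 1) e)
  | r, nu e => nu (rename (fun n => match n with | 0 => 0 | m+1 => r m + 1) e)

/-- Parallel (capture-avoiding) substitution. -/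
def msubst : (ℕ → Expr A) → Expr A → Expr A
  | τ, var n => τ n
  | τ, act a e => act a (msubst τ e)
  | τ, plus e f => plus (msubst τ e) (msubst τ f)
  | τ, inter e f => inter (msubst τ e) (msubst τ f)
  | τ, mu e => mu (msubst (fun n => match n with | 0 => var 0 | m+1 => rename (· + 1) (τ m)) e)
  | τ, nu e => nu (msubst (fun n => match n with | 0 => var 0 | m+1 => rename (· + 1) (τ m)) e)

/-- Substitution of `g` for the variable bound at de Bruijn index `0`:
`e(g)` when `e` has distinguished free variable `0`. -/
def subst0 (g : Expr A) (e : Expr A) : Expr A :=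
  msubst (fun n => match n with | 0 => g | m+1 => var m) e

/-- The de Bruijn variable `n` occurs free in an expression. -/
def FreeIn : ℕ → Expr A → Prop
  | n, var m => n = m
  | n, act _ e => FreeIn n e
  | n, plus e f => FreeIn n e ∨ FreeIn n f
  | n, inter e f => FreeIn n e ∨ FreeIn n f
  | n, mu e => FreeIn (n+1) e
  | n, nu e => FreeIn (n+1) e

/-- All free variables of the expression are `< k`. -/
def ClosedAbove : Expr A → ℕ → Prop
  | var n, k => n < k
  | act _ e, k => ClosedAbove e k
  | plus e f, k => ClosedAbove e k ∧ ClosedAbove f k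
  | inter e f, k => ClosedAbove e k ∧ ClosedAbove f k
  | mu e, k => ClosedAbove e (k+1)
  | nu e, k => ClosedAbove e (k+1)

/-- An expression is closed if it has no free variables. -/
def Closed (e : Expr A) : Prop := ClosedAbove e 0

/-- A finite sum `Σ` of expressions (with `0` for the empty sum). -/
def listSum (l : List (Expr A)) : Expr A := l.foldr plus (zero A)

/-- The syntactic complement `eᶜ` of an RLL expression:
`Xᶜ = X`, `(a·e)ᶜ = a·eᶜ + Σ_{b ≠ a} b·⊤`, `(e+f)ᶜ = eᶜ ∩ fᶜ`,
`(e∩f)ᶜ = eᶜ + fᶜ`, `(μX e)ᶜ = νX eᶜ`, `(νX e)ᶜ = μX eᶜ`. -/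
noncomputable def compl [Fintype A] [DecidableEq A] : Expr A → Expr A
  | var n => var n
  | act a e => plus (act a (compl e))
      (listSum ((((Finset.univ : Finset A).erase a).toList).map (fun b => act b (top A))))
  | plus e f => inter (compl e) (compl f)
  | inter e f => plus (compl e) (compl f)
  | mu e => nu (compl e)
  | nu e => mu (compl e)

end Expr

end RLLPaper
namespace RLLPaper

namespace Expr

variable {A : Type}

/-- The language interpretation of an RLL expression, relative to an
environment `ρ` assigning languages of ω-words to the free variables.
`μ` is interpreted as the intersection of all prefixed points, `ν` as the
union of all postfixed points (the least/greatest fixed points, by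
Knaster-Tarski). -/
def Lang : Expr A → (ℕ → Set (Stream' A)) → Set (Stream' A)
  | var n, ρ => ρ n
  | act a e, ρ => Stream'.cons a '' Lang e ρ
  | plus e f, ρ => Lang e ρ ∪ Lang f ρ
  | inter e f, ρ => Lang e ρ ∩ Lang f ρ
  | mu e, ρ => ⋂₀ {S | Lang e (fun n => match n with | 0 => S | m+1 => ρ m) ⊆ S}
  | nu e, ρ => ⋃₀ {S | S ⊆ Lang e (fun n => match n with | 0 => S | m+1 => ρ m)}

/-- The language of a (closed) RLL expression. -/
def lang (e : Expr A) : Set (Stream' A) := Lang e (fun _ => ∅)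

end Expr

end RLLPaper
namespace RLLPaper

/-- Formulas of the linear-time μ-calculus `μLTL` over propositional letters
from `P`, in negation normal form, with de Bruijn indices for variables. -/
inductive LTL (P : Type) : Type
  | bot : LTL P
  | top : LTL P
  | pos : P → LTL P
  | neg : P → LTL P
  | var : ℕ → LTL P
  | or : LTL P → LTL P → LTL P
  | and : LTL P → LTL P → LTL P
  | next : LTL P → LTL P
  | mu : LTL P → LTL P
  | nu : LTL P → LTL P

namespace LTL

variable {P : Type}

/-- Renaming of free de Bruijn variables of a μLTL formula. -/
def rename : (ℕ → ℕ) → LTL P → LTL P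
  | _, bot => bot
  | _, top => top
  | _, pos p => pos p
  | _, neg p => neg p
  | r, var n => var (r n)
  | r, or φ ψ => or (rename r φ) (rename r ψ)
  | r, and φ ψ => and (rename r φ) (rename r ψ)
  | r, next φ => next (rename r φ)
  | r, mu φ => mu (rename (fun n => match n with | 0 => 0 | m+1 => r m + 1) φ)
  | r, nu φ => nu (rename (fun n => match n with | 0 => 0 | m+1 => r m + 1) φ)

/-- Parallel capture-avoiding substitution for μLTL formulas. -/
def msubst : (ℕ → LTL P) → LTL P → LTL P
  | _, bot => bot
  | _, top => top
  | _, pos p => pos p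
  | _, neg p => neg p
  | τ, var n => τ n
  | τ, or φ ψ => or (msubst τ φ) (msubst τ ψ)
  | τ, and φ ψ => and (msubst τ φ) (msubst τ ψ)
  | τ, next φ => next (msubst τ φ)
  | τ, mu φ => mu (msubst (fun n => match n with | 0 => var 0 | m+1 => rename (· + 1) (τ m)) φ)
  | τ, nu φ => nu (msubst (fun n => match n with | 0 => var 0 | m+1 => rename (· + 1) (τ m)) φ)

/-- Substitution `φ(χ)` of `χ` for the variable bound at de Bruijn index 0. -/
def subst0 (χ : LTL P) (φ : LTL P) : LTL P :=
  msubst (fun n => match n with | 0 => χ | m+1 => var m) φ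

/-- Negation, extended to all formulas by De Morgan duality,
with `◯` self-dual. -/
def negF : LTL P → LTL P
  | bot => top
  | top => bot
  | pos p => neg p
  | neg p => pos p
  | var n => var n
  | or φ ψ => and (negF φ) (negF ψ)
  | and φ ψ => or (negF φ) (negF ψ)
  | next φ => next (negF φ)
  | mu φ => nu (negF φ)
  | nu φ => mu (negF φ)

/-- Implication macro `φ → ψ := ¬φ ∨ ψ`. -/
def impF (φ ψ : LTL P) : LTL P := or (negF φ) ψ

/-- Bi-implication macro. -/
def iffF (φ ψ : LTL P) : LTL P := and (impF φ ψ) (impF ψ φ)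

/-- Semantics of μLTL over the ω-word `σ ∈ (P(𝐏))^ω` (the canonical linear
Kripke structure), relative to an environment `ρ` for the free variables:
`φ^σ ⊆ ω` is the set of time points at which `φ` holds. -/
def sem : LTL P → Stream' (Finset P) → (ℕ → Set ℕ) → Set ℕ
  | bot, _, _ => ∅
  | top, _, _ => Set.univ
  | pos p, σ, _ => {n | p ∈ σ.get n}
  | neg p, σ, _ => {n | p ∉ σ.get n}
  | var n, _, ρ => ρ n
  | or φ ψ, σ, ρ => sem φ σ ρ ∪ sem ψ σ ρ
  | and φ ψ, σ, ρ => sem φ σ ρ ∩ sem ψ σ ρ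
  | next φ, σ, ρ => {n | n + 1 ∈ sem φ σ ρ}
  | mu φ, σ, ρ => ⋂₀ {S | sem φ σ (fun n => match n with | 0 => S | m+1 => ρ m) ⊆ S}
  | nu φ, σ, ρ => ⋃₀ {S | S ⊆ sem φ σ (fun n => match n with | 0 => S | m+1 => ρ m)}

/-- `σ ⊨ φ` iff `0 ∈ φ^σ` (for closed `φ`). -/
def Sat (σ : Stream' (Finset P)) (φ : LTL P) : Prop := 0 ∈ sem φ σ (fun _ => ∅)

/-- A finite conjunction `⋀` of formulas. -/
def bigAnd (l : List (LTL P)) : LTL P := l.foldr and top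

end LTL

/-- Classical propositional formulas (used to state "all propositional
tautologies" as an axiom scheme of the μLTL Hilbert system). -/
inductive PF : Type
  | pvar : ℕ → PF
  | bot : PF
  | top : PF
  | disj : PF → PF → PF
  | conj : PF → PF → PF
  | pneg : PF → PF

namespace PF

/-- Boolean evaluation of a propositional formula. -/
def eval : (ℕ → Bool) → PF → Bool
  | v, pvar n => v n
  | _, bot => false
  | _, top => true
  | v, disj p q => eval v p || eval v q
  | v, conj p q => eval v p && eval v q
  | v, pneg p => ! eval v p

/-- A propositional tautology. -/
def Taut (p : PF) : Prop := ∀ v, eval v p = true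

/-- Substitution of μLTL formulas into a propositional formula
(negation is interpreted via De Morgan negation `negF`). -/
def substLTL {P : Type} (s : ℕ → LTL P) : PF → LTL P
  | pvar n => s n
  | bot => LTL.bot
  | top => LTL.top
  | disj p q => LTL.or (substLTL s p) (substLTL s q)
  | conj p q => LTL.and (substLTL s p) (substLTL s q)
  | pneg p => LTL.negF (substLTL s p)

end PF

/-- The Hilbert-style axiomatisation of μLTL: all propositional tautologies,
normality of `◯` over `∨` and `∧`, fixed-point unfolding axioms, with
modus ponens, necessitation, induction and coinduction rules. -/
inductive LTLProves {P : Type} : LTL P → Prop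
  | taut (p : PF) (s : ℕ → LTL P) : p.Taut → LTLProves (p.substLTL s)
  | next_or (φ ψ : LTL P) :
      LTLProves (LTL.iffF (.next (.or φ ψ)) (.or (.next φ) (.next ψ)))
  | next_and (φ ψ : LTL P) :
      LTLProves (LTL.iffF (.next (.and φ ψ)) (.and (.next φ) (.next ψ)))
  | mu_fold (φ : LTL P) : LTLProves (LTL.impF (LTL.subst0 (.mu φ) φ) (.mu φ))
  | nu_unfold (φ : LTL P) : LTLProves (LTL.impF (.nu φ) (LTL.subst0 (.nu φ) φ))
  | mp {φ ψ : LTL P} : LTLProves φ → LTLProves (LTL.impF φ ψ) → LTLProves ψ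
  | nec {φ : LTL P} : LTLProves φ → LTLProves (.next φ)
  | ind {φ ψ : LTL P} :
      LTLProves (LTL.impF (LTL.subst0 ψ φ) ψ) → LTLProves (LTL.impF (.mu φ) ψ)
  | coind {φ ψ : LTL P} :
      LTLProves (LTL.impF ψ (LTL.subst0 ψ φ)) → LTLProves (LTL.impF ψ (.nu φ))

end RLLPaper
namespace RLLPaper

variable {P : Type} [Fintype P] [DecidableEq P]

/-- The translation `e°` of RLL expressions over the alphabet `A = P(𝐏)` into
μLTL formulas: `X° = X`, `(a·e)° = ⋀_{p∈a} p ∧ ⋀_{p∉a} ¬p ∧ ◯e°`,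
`(e+f)° = e° ∨ f°`, `(e∩f)° = e° ∧ f°`, `(μX e)° = μX e°`, `(νX e)° = νX e°`. -/
noncomputable def toLTL : Expr (Finset P) → LTL P
  | .var n => .var n
  | .act a e => .and (LTL.bigAnd (a.toList.map LTL.pos))
      (.and (LTL.bigAnd ((aᶜ : Finset P).toList.map LTL.neg)) (.next (toLTL e)))
  | .plus e f => .or (toLTL e) (toLTL f)
  | .inter e f => .and (toLTL e) (toLTL f)
  | .mu e => .mu (toLTL e)
  | .nu e => .nu (toLTL e)

/-- The translation `φ•` of μLTL formulas into RLL expressions over the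
alphabet `A = P(𝐏)`: `⊥• = 0`, `⊤• = ⊤`, `p• = Σ_{a∋p} a·⊤`,
`(¬p)• = Σ_{a∌p} a·⊤`, `X• = X`, `(φ∨ψ)• = φ•+ψ•`, `(φ∧ψ)• = φ•∩ψ•`,
`(◯φ)• = Σ_{a∈A} a·φ•`, `(μXφ)• = μX φ•`, `(νXφ)• = νX φ•`. -/
noncomputable def toRLL : LTL P → Expr (Finset P)
  | .bot => Expr.zero (Finset P)
  | .top => Expr.top (Finset P)
  | .pos p => Expr.listSum
      ((((Finset.univ : Finset (Finset P)).filter (fun a => p ∈ a)).toList).map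
        (fun a => Expr.act a (Expr.top (Finset P))))
  | .neg p => Expr.listSum
      ((((Finset.univ : Finset (Finset P)).filter (fun a => p ∉ a)).toList).map
        (fun a => Expr.act a (Expr.top (Finset P))))
  | .var n => .var n
  | .or φ ψ => .plus (toRLL φ) (toRLL ψ)
  | .and φ ψ => .inter (toRLL φ) (toRLL ψ)
  | .next φ => Expr.listSum
      (((Finset.univ : Finset (Finset P)).toList).map (fun a => Expr.act a (toRLL φ)))
  | .mu φ => .mu (toRLL φ)
  | .nu φ => .nu (toRLL φ)

end RLLPaper

namespace RLLPaper

open Expr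

/-!
Sending a time point `k` to the suffix `σ.drop k` gives a map `ω → A^ω`, and taking preimages along
it turns `Lang e` into the semantics of `e°` on `σ`, as an equality and for arbitrary environments.
Preimage has both a left adjoint (image) and a right adjoint (`Set.kernImage`), so it commutes with
greatest and with least fixed points. Evaluating at time `0` compares the two languages.
-/

section Fusion

variable {α β : Type*} [CompleteLattice α] [CompleteLattice β]

theorem map_lfp_of_semiconj {l : α → β} {u : β → α} (gc : GaloisConnection l u)
    {F : α →o α} {G : β →o β} (h : Function.Semiconj l F G) : l F.lfp = G.lfp := by
  apply le_antisymm
  · refine gc.l_le (F.lfp_le (gc.le_u ?_))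
    calc l (F (u G.lfp)) = G (l (u G.lfp)) := h _
      _ ≤ G G.lfp := G.mono (gc.l_u_le _)
      _ = G.lfp := G.map_lfp
  · apply G.lfp_le
    rw [← h F.lfp, F.map_lfp]

theorem map_gfp_of_semiconj {l : β → α} {u : α → β} (gc : GaloisConnection l u)
    {F : α →o α} {G : β →o β} (h : Function.Semiconj u F G) : u F.gfp = G.gfp :=
  map_lfp_of_semiconj (α := αᵒᵈ) (β := βᵒᵈ) (F := F.dual) (G := G.dual) gc.dual h

end Fusion

section Extend

variable {α β : Type*}

/-- The environment binding the de Bruijn index `0` to `S` and shifting `ρ` past it, under which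
the semantics evaluates the body of a fixed point binder. -/
def extend (S : α) (ρ : ℕ → α) : ℕ → α
  | 0 => S
  | n + 1 => ρ n

theorem extend_mono [Preorder α] {S T : α} {ρ η : ℕ → α} (hS : S ≤ T) (hρ : ρ ≤ η) :
    extend S ρ ≤ extend T η
  | 0 => hS
  | n + 1 => hρ n

theorem comp_extend (f : α → β) (S : α) (ρ : ℕ → α) :
    f ∘ extend S ρ = extend (f S) (f ∘ ρ) := by
  funext n
  cases n <;> rfl

end Extend

namespace Expr

variable {A : Type}

theorem Lang_mono (e : Expr A) : Monotone (Lang e) := by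
  induction e with
  | var n => exact fun _ _ h => h n
  | act a e ih => exact fun _ _ h => Set.image_mono (ih h)
  | plus e f ihe ihf => exact fun _ _ h => Set.union_subset_union (ihe h) (ihf h)
  | inter e f ihe ihf => exact fun _ _ h => Set.inter_subset_inter (ihe h) (ihf h)
  | mu e ih =>
    exact fun _ _ h => Set.sInter_subset_sInter fun _ hS =>
      Set.Subset.trans (ih (extend_mono le_rfl h)) hS
  | nu e ih =>
    exact fun _ _ h => Set.sUnion_subset_sUnion fun _ hS =>
      Set.Subset.trans hS (ih (extend_mono le_rfl h))

/-- The monotone operator `S ↦ L(e(S))` on languages, whose extremal fixed points are `L(μX e)`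
and `L(νX e)`. -/
def langHom (e : Expr A) (ρ : ℕ → Set (Stream' A)) : Set (Stream' A) →o Set (Stream' A) where
  toFun S := Lang e (extend S ρ)
  monotone' _ _ h := Lang_mono e (extend_mono h le_rfl)

theorem Lang_mu (e : Expr A) (ρ : ℕ → Set (Stream' A)) : Lang (mu e) ρ = (langHom e ρ).lfp :=
  rfl

theorem Lang_nu (e : Expr A) (ρ : ℕ → Set (Stream' A)) : Lang (nu e) ρ = (langHom e ρ).gfp :=
  rfl

theorem mem_Lang_act {a : A} {e : Expr A} {ρ : ℕ → Set (Stream' A)} {σ : Stream' A} :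
    σ ∈ Lang (act a e) ρ ↔ σ.head = a ∧ σ.tail ∈ Lang e ρ := by
  constructor
  · rintro ⟨τ, hτ, rfl⟩
    exact ⟨rfl, hτ⟩
  · rintro ⟨rfl, hσ⟩
    exact ⟨σ.tail, hσ, σ.eta⟩

end Expr

namespace LTL

variable {P : Type}

theorem sem_mono (φ : LTL P) (σ : Stream' (Finset P)) : Monotone (sem φ σ) := by
  induction φ with
  | bot | top | pos | neg => exact monotone_const
  | var n => exact fun _ _ h => h n
  | or φ ψ ihφ ihψ => exact fun _ _ h => Set.union_subset_union (ihφ h) (ihψ h)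
  | and φ ψ ihφ ihψ => exact fun _ _ h => Set.inter_subset_inter (ihφ h) (ihψ h)
  | next φ ih => exact fun _ _ h => Set.preimage_mono (ih h)
  | mu φ ih =>
    exact fun _ _ h => Set.sInter_subset_sInter fun _ hS =>
      Set.Subset.trans (ih (extend_mono le_rfl h)) hS
  | nu φ ih =>
    exact fun _ _ h => Set.sUnion_subset_sUnion fun _ hS =>
      Set.Subset.trans hS (ih (extend_mono le_rfl h))

/-- The monotone operator `S ↦ φ(S)^σ` on sets of time points, whose extremal fixed points are
`(μX φ)^σ` and `(νX φ)^σ`. -/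
def semHom (φ : LTL P) (σ : Stream' (Finset P)) (ρ : ℕ → Set ℕ) : Set ℕ →o Set ℕ where
  toFun S := sem φ σ (extend S ρ)
  monotone' _ _ h := sem_mono φ σ (extend_mono h le_rfl)

theorem sem_mu (φ : LTL P) (σ : Stream' (Finset P)) (ρ : ℕ → Set ℕ) :
    sem (mu φ) σ ρ = (semHom φ σ ρ).lfp :=
  rfl

theorem sem_nu (φ : LTL P) (σ : Stream' (Finset P)) (ρ : ℕ → Set ℕ) :
    sem (nu φ) σ ρ = (semHom φ σ ρ).gfp :=
  rfl

theorem mem_sem_bigAnd {l : List (LTL P)} {σ : Stream' (Finset P)} {ρ : ℕ → Set ℕ} {k : ℕ} :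
    k ∈ sem (bigAnd l) σ ρ ↔ ∀ φ ∈ l, k ∈ sem φ σ ρ := by
  induction l with
  | nil => exact iff_of_true (Set.mem_univ k) (List.forall_mem_nil _)
  | cons φ l ih => rw [List.forall_mem_cons, ← ih]; rfl

end LTL

section Translation

variable {P : Type} [Fintype P] [DecidableEq P]

theorem mem_sem_toLTL_act {a : Finset P} {e : Expr (Finset P)} {σ : Stream' (Finset P)}
    {ρ : ℕ → Set ℕ} {k : ℕ} :
    k ∈ LTL.sem (toLTL (act a e)) σ ρ ↔ σ.get k = a ∧ k + 1 ∈ LTL.sem (toLTL e) σ ρ := by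
  have pos_iff : k ∈ LTL.sem (LTL.bigAnd (a.toList.map LTL.pos)) σ ρ ↔ a ⊆ σ.get k := by
    simp only [LTL.mem_sem_bigAnd, List.forall_mem_map, Finset.mem_toList]
    rfl
  have neg_iff : k ∈ LTL.sem (LTL.bigAnd (aᶜ.toList.map LTL.neg)) σ ρ ↔ σ.get k ⊆ a := by
    simp only [LTL.mem_sem_bigAnd, List.forall_mem_map, Finset.mem_toList, Finset.mem_compl]
    exact forall_congr' fun _ => not_imp_not
  calc k ∈ LTL.sem (toLTL (act a e)) σ ρ
      ↔ a ⊆ σ.get k ∧ σ.get k ⊆ a ∧ k + 1 ∈ LTL.sem (toLTL e) σ ρ :=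
        and_congr pos_iff (and_congr_left' neg_iff)
    _ ↔ σ.get k = a ∧ k + 1 ∈ LTL.sem (toLTL e) σ ρ := by
        rw [← and_assoc, Finset.Subset.antisymm_iff, and_comm (a := a ⊆ σ.get k)]

theorem semantic_adequacy_general (e : Expr (Finset P)) (σ : Stream' (Finset P))
    (ρ : ℕ → Set (Stream' (Finset P))) :
    (σ.drop ·) ⁻¹' Lang e ρ = LTL.sem (toLTL e) σ (Set.preimage (σ.drop ·) ∘ ρ) := by
  induction e generalizing ρ with
  | var n => rfl
  | act a e ih =>
    ext k
    rw [mem_sem_toLTL_act, ← ih ρ, Set.mem_preimage, mem_Lang_act, Stream'.head_drop,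
      Stream'.tail_drop', Set.mem_preimage]
  | plus e f ihe ihf => exact congrArg₂ (· ∪ ·) (ihe ρ) (ihf ρ)
  | inter e f ihe ihf => exact congrArg₂ (· ∩ ·) (ihe ρ) (ihf ρ)
  | mu e ih =>
    rw [Lang_mu, toLTL, LTL.sem_mu]
    refine map_lfp_of_semiconj Set.preimage_kernImage fun S => ?_
    exact (ih _).trans (congrArg _ (comp_extend _ S ρ))
  | nu e ih =>
    rw [Lang_nu, toLTL, LTL.sem_nu]
    refine map_gfp_of_semiconj Set.image_preimage fun S => ?_
    exact (ih _).trans (congrArg _ (comp_extend _ S ρ))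

end Translation

/-- Semantic adequacy of the translation into the linear-time
μ-calculus: for every closed RLL expression `e` over the alphabet `A = P(𝐏)`,
`L(e) ⊆ L(e°)`, where `L(φ) = {σ ∈ A^ω | σ ⊨ φ}` for closed μLTL formulas. -/
theorem semantic_adequacy {P : Type} [Fintype P] [DecidableEq P]
    (e : Expr (Finset P)) (he : e.Closed) :
    lang e ⊆ {σ : Stream' (Finset P) | LTL.Sat σ (toLTL e)} := by
  intro σ hσ
  exact (Set.ext_iff.mp (semantic_adequacy_general e σ fun _ => ∅) 0).mp hσ

end RLLPaper
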